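/- arXiv:1605.05069 — 2 statements merged into one kernel-verified Lean document; each statement's English description precedes it below -/
import Mathlib

section
/- Let (X₁, X₂) be distributed according to the uniform probability measure P on the lower triangle Ω₂ = {(x₁, x₂) ∈ [0,1]² : x₁ + x₂ ≤ 1}, and let f(x₁, x₂) = |4x₁ − 2| · (|4x₂ − 2| + 1)/2. Then the main effect Sobol' index of x₁, namely S_{x₁} = Var( E_P[f(X₁, X₂) | X₁] ) / Var_P(f), equals −93/40 + (9/2)·ln 2. -/
/-!
Put `L = 1 - x₁`. Given `X₁ = x₁` the second coordinate is uniform on `[0, L]`, so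
`E[f | X₁ = x₁] = |4x₁ - 2| · g(L)`, where `g(L) = L⁻¹ ∫₀ᴸ (|4y - 2| + 1)/2 dy` is the average of
the second factor of `f`. On `(0, 1]` it has the form `g(L) = |L - 1/2| + 1/(2 max(L, 1/2))`, which
is continuous on all of `ℝ`. That this is the conditional expectation follows
from Fubini on the triangle (`integral_triangle`), and the same formula reduces the moments
`E f = 1`, `E f² = 13/9` and `E[E[f | X₁]²] = 2 log 2 - 1/30` to one-dimensional integrals that are
piecewise polynomial, up to one term `1/L` on `[1/2, 1]`, which gives the logarithm.
-/

open MeasureTheory ProbabilityTheory Set Real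

/-- The closed lower triangle in the unit square. -/
def lowerTriangle : Set (ℝ × ℝ) :=
  {q : ℝ × ℝ | q.1 ∈ Icc (0 : ℝ) 1 ∧ q.2 ∈ Icc (0 : ℝ) 1 ∧ q.1 + q.2 ≤ 1}

/-- The uniform probability measure on the lower triangle (density `2`). -/
noncomputable def triangleMeasure : Measure (ℝ × ℝ) :=
  (2 : ENNReal) • volume.restrict lowerTriangle

/-- The g-function with parameters `a₁ = 0`, `a₂ = 1`. -/
noncomputable def gFun (q : ℝ × ℝ) : ℝ := |4 * q.1 - 2| * (|4 * q.2 - 2| + 1) / 2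

/-- The average of `y ↦ (|4y - 2| + 1)/2` over `[0, L]`, for `0 < L ≤ 1`, in a form that is
continuous on the whole line. -/
noncomputable def sliceMean (L : ℝ) : ℝ := |L - 1 / 2| + 1 / (2 * max L (1 / 2))

/-- The regression function `x ↦ E[f | X₁ = x]`. -/
noncomputable def mainEffect (x : ℝ) : ℝ := |4 * x - 2| * sliceMean (1 - x)

lemma isClosed_lowerTriangle : IsClosed lowerTriangle := by
  have h : lowerTriangle = (Icc (0 : ℝ) 1 ×ˢ Icc (0 : ℝ) 1) ∩ {q | q.1 + q.2 ≤ 1} := by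
    ext q; simp only [lowerTriangle, mem_ofPred_eq, mem_inter_iff, mem_prod]; tauto
  rw [h]
  exact (isClosed_Icc.prod isClosed_Icc).inter (isClosed_le (by fun_prop) (by fun_prop))

lemma isCompact_lowerTriangle : IsCompact lowerTriangle :=
  (isCompact_Icc.prod isCompact_Icc : IsCompact (Icc (0 : ℝ) 1 ×ˢ Icc (0 : ℝ) 1)).of_isClosed_subset
    isClosed_lowerTriangle (fun _ hq => ⟨hq.1, hq.2.1⟩)

lemma integrable_triangle_of_continuous {F : ℝ × ℝ → ℝ} (hF : Continuous F) :
    Integrable F triangleMeasure := by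
  have : IntegrableOn F lowerTriangle volume :=
    hF.continuousOn.integrableOn_compact isCompact_lowerTriangle
  exact this.smul_measure (by norm_num)

/-- Fubini's theorem on the triangle. -/
lemma integral_triangle {F : ℝ × ℝ → ℝ} (hF : Integrable F triangleMeasure) :
    ∫ q, F q ∂triangleMeasure = 2 * ∫ x in (0 : ℝ)..1, ∫ y in (0 : ℝ)..(1 - x), F (x, y) := by
  have hm : MeasurableSet lowerTriangle := isClosed_lowerTriangle.measurableSet
  have hF' : IntegrableOn F lowerTriangle volume :=
    (integrable_smul_measure (by norm_num) (by norm_num)).1 hF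
  rw [triangleMeasure, integral_smul_measure, ← integral_indicator hm, Measure.volume_eq_prod,
    integral_prod _ ((integrable_indicator_iff hm).2 hF'),
    intervalIntegral.integral_of_le zero_le_one, ← integral_Icc_eq_integral_Ioc,
    ← integral_indicator measurableSet_Icc]
  simp only [ENNReal.toReal_ofNat, smul_eq_mul]
  congr 2
  ext x
  by_cases hx : x ∈ Icc (0 : ℝ) 1
  · rw [indicator_of_mem hx, intervalIntegral.integral_of_le (by linarith [hx.2]),
      ← integral_Icc_eq_integral_Ioc, ← integral_indicator measurableSet_Icc]
    congr 1
    ext y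
    have hiff : (x, y) ∈ lowerTriangle ↔ y ∈ Icc (0 : ℝ) (1 - x) := by
      simp only [lowerTriangle, mem_ofPred_eq, mem_Icc] at hx ⊢
      constructor
      · rintro ⟨_, h2, h3⟩; exact ⟨h2.1, by linarith⟩
      · rintro ⟨h2, h3⟩; exact ⟨hx, ⟨h2, by linarith⟩, by linarith⟩
    by_cases hy : y ∈ Icc (0 : ℝ) (1 - x)
    · rw [indicator_of_mem hy, indicator_of_mem (hiff.2 hy)]
    · rw [indicator_of_notMem hy, indicator_of_notMem (mt hiff.1 hy)]
  · rw [indicator_of_notMem hx]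
    have : ∀ y, lowerTriangle.indicator F (x, y) = 0 := fun y =>
      indicator_of_notMem (fun h => hx h.1) _
    simp [this]

instance isProbabilityMeasure_triangleMeasure : IsProbabilityMeasure triangleMeasure := by
  have h := integral_triangle (integrable_triangle_of_continuous (F := fun _ => 1) (by fun_prop))
  have h2 : (2 : ℝ) * ∫ x in (0 : ℝ)..1, ∫ _ in (0 : ℝ)..(1 - x), (1 : ℝ) = 1 := by
    simp only [intervalIntegral.integral_const, smul_eq_mul, mul_one, sub_zero]
    rw [intervalIntegral.integral_sub (by simp) (by simp)]
    simp; norm_num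
  rw [h2, integral_const, smul_eq_mul, mul_one] at h
  refine ⟨?_⟩
  rw [measureReal_def] at h
  exact (ENNReal.toReal_eq_one_iff _).1 h

lemma continuous_gFun : Continuous gFun := by unfold gFun; fun_prop

lemma continuous_sliceMean : Continuous sliceMean := by
  unfold sliceMean
  refine Continuous.add (by fun_prop) (Continuous.div (by fun_prop) (by fun_prop) fun L => ?_)
  have : (1 : ℝ) / 2 ≤ max L (1 / 2) := le_max_right _ _
  positivity

lemma continuous_mainEffect : Continuous mainEffect := by
  unfold mainEffect
  exact Continuous.mul (by fun_prop) (continuous_sliceMean.comp (by fun_prop))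

/-- Integration of a continuous function on `[0, L]` that has one antiderivative on `[0, 1/2]` and
another one on `[1/2, 1]`. -/
lemma integral_piecewise {φ p q A B : ℝ → ℝ} (hφ : Continuous φ)
    (hp : ∀ y, 0 ≤ y → y ≤ 1 / 2 → φ y = p y) (hq : ∀ y, 1 / 2 ≤ y → y ≤ 1 → φ y = q y)
    (hA : ∀ y, HasDerivAt A (p y) y) (hB : ∀ y, 1 / 2 ≤ y → HasDerivAt B (q y) y)
    {L : ℝ} (h0 : 0 ≤ L) (h1 : L ≤ 1) :
    ∫ y in (0 : ℝ)..L, φ y =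
      if L ≤ 1 / 2 then A L - A 0 else A (1 / 2) - A 0 + (B L - B (1 / 2)) := by
  have low : ∀ M : ℝ, 0 ≤ M → M ≤ 1 / 2 → ∫ y in (0 : ℝ)..M, φ y = A M - A 0 := by
    intro M hM0 hM
    refine intervalIntegral.integral_eq_sub_of_hasDerivAt (fun y hy => ?_)
      (hφ.intervalIntegrable _ _)
    rw [uIcc_of_le hM0] at hy
    rw [hp y hy.1 (hy.2.trans hM)]
    exact hA y
  split_ifs with hL
  · exact low L h0 hL
  · push Not at hL
    rw [← intervalIntegral.integral_add_adjacent_intervals (hφ.intervalIntegrable 0 (1 / 2))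
      (hφ.intervalIntegrable (1 / 2) L), low _ (by norm_num) le_rfl]
    congr 1
    refine intervalIntegral.integral_eq_sub_of_hasDerivAt (fun y hy => ?_)
      (hφ.intervalIntegrable _ _)
    rw [uIcc_of_le hL.le] at hy
    rw [hq y hy.1 (hy.2.trans h1)]
    exact hB y hy.1

lemma abs_low {y : ℝ} (h : y ≤ 1 / 2) : |4 * y - 2| = 2 - 4 * y := by
  rw [abs_of_nonpos (by linarith)]; ring

lemma abs_high {y : ℝ} (h : 1 / 2 ≤ y) : |4 * y - 2| = 4 * y - 2 :=
  abs_of_nonneg (by linarith)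

lemma sliceMean_low {L : ℝ} (h : L ≤ 1 / 2) : sliceMean L = 3 / 2 - L := by
  rw [sliceMean, max_eq_right h, abs_of_nonpos (by linarith)]; norm_num; ring

lemma sliceMean_high {L : ℝ} (h : 1 / 2 ≤ L) : sliceMean L = L - 1 / 2 + 1 / (2 * L) := by
  rw [sliceMean, max_eq_left h, abs_of_nonneg (by linarith)]

lemma integral_slice {L : ℝ} (h0 : 0 ≤ L) (h1 : L ≤ 1) :
    ∫ y in (0 : ℝ)..L, (|4 * y - 2| + 1) / 2 = L * sliceMean L := by
  rw [integral_piecewise (φ := fun y => (|4 * y - 2| + 1) / 2)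
    (p := fun y => (3 - 4 * y) / 2) (q := fun y => (4 * y - 1) / 2)
    (A := fun y => (3 * y - 2 * y ^ 2) / 2) (B := fun y => (2 * y ^ 2 - y) / 2) (by fun_prop)
    (fun y _ h => by simp only [abs_low h]; ring) (fun y h _ => by simp only [abs_high h]; ring)
    (fun y => ?_) (fun y _ => ?_) h0 h1]
  · split_ifs with h
    · rw [sliceMean_low h]; ring
    · push Not at h
      rw [sliceMean_high h.le]
      field_simp
      ring
  · refine HasDerivAt.congr_deriv ((((hasDerivAt_id y).const_mul 3).sub ((hasDerivAt_pow 2 y).const_mul 2)).div_const 2) ?_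
    simp; ring
  · refine HasDerivAt.congr_deriv ((((hasDerivAt_pow 2 y).const_mul 2).sub (hasDerivAt_id y)).div_const 2) ?_
    simp; ring

/-- The integral of `y ↦ ((|4y - 2| + 1)/2)²` over `[0, L]`, for `0 ≤ L ≤ 1`. -/
noncomputable def sliceSq (L : ℝ) : ℝ :=
  if L ≤ 1 / 2 then (27 - (3 - 4 * L) ^ 3) / 48 else (25 + (4 * L - 1) ^ 3) / 48

lemma integral_slice_sq {L : ℝ} (h0 : 0 ≤ L) (h1 : L ≤ 1) :
    ∫ y in (0 : ℝ)..L, ((|4 * y - 2| + 1) / 2) ^ 2 = sliceSq L := by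
  rw [integral_piecewise (φ := fun y => ((|4 * y - 2| + 1) / 2) ^ 2)
    (p := fun y => (3 - 4 * y) ^ 2 / 4) (q := fun y => (4 * y - 1) ^ 2 / 4)
    (A := fun y => -(3 - 4 * y) ^ 3 / 48) (B := fun y => (4 * y - 1) ^ 3 / 48) (by fun_prop)
    (fun y _ h => by simp only [abs_low h]; ring) (fun y h _ => by simp only [abs_high h]; ring)
    (fun y => ?_) (fun y _ => ?_) h0 h1]
  · unfold sliceSq
    split_ifs with h <;> norm_num <;> ring
  · refine HasDerivAt.congr_deriv ((((((hasDerivAt_id y).const_mul 4).const_sub 3).pow 3).neg).div_const 48) ?_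
    simp; ring
  · refine HasDerivAt.congr_deriv (((((hasDerivAt_id y).const_mul 4).sub_const 1).pow 3).div_const 48) ?_
    simp; ring

lemma continuous_sliceSq : Continuous sliceSq := by
  unfold sliceSq
  refine Continuous.if_le (by fun_prop) (by fun_prop) continuous_id continuous_const ?_
  rintro x rfl
  norm_num

lemma abs_reflect (x : ℝ) : |4 * x - 2| = |4 * (1 - x) - 2| := by
  rw [show 4 * (1 - x) - 2 = -(4 * x - 2) by ring, abs_neg]

lemma integral_gFun_slice {x : ℝ} (hx : x ∈ Icc (0 : ℝ) 1) :
    ∫ y in (0 : ℝ)..(1 - x), gFun (x, y) = (1 - x) * mainEffect x := by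
  have h : ∀ y, gFun (x, y) = |4 * x - 2| * ((|4 * y - 2| + 1) / 2) := fun y => by
    simp only [gFun]; ring
  simp only [h]
  rw [intervalIntegral.integral_const_mul, integral_slice (by linarith [hx.2]) (by linarith [hx.1]),
    mainEffect]
  ring

/-- The conditional expectation of the g-function given the first coordinate. -/
lemma condExp_gFun :
    triangleMeasure[gFun | MeasurableSpace.comap Prod.fst inferInstance]
      =ᵐ[triangleMeasure] fun q => mainEffect q.1 := by
  have hle : MeasurableSpace.comap (Prod.fst : ℝ × ℝ → ℝ) inferInstance
      ≤ (inferInstance : MeasurableSpace (ℝ × ℝ)) := measurable_fst.comap_le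
  have hgi := integrable_triangle_of_continuous continuous_gFun
  have hmi : Integrable (fun q : ℝ × ℝ => mainEffect q.1) triangleMeasure :=
    integrable_triangle_of_continuous (continuous_mainEffect.comp continuous_fst)
  refine (ae_eq_condExp_of_forall_setIntegral_eq hle hgi (fun _ _ _ => hmi.integrableOn) ?_
    ?_).symm
  · rintro _ ⟨s, hs, rfl⟩ -
    have hs' : MeasurableSet (Prod.fst ⁻¹' s : Set (ℝ × ℝ)) := measurable_fst hs
    rw [← integral_indicator hs', ← integral_indicator hs', integral_triangle (hmi.indicator hs'),
      integral_triangle (hgi.indicator hs')]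
    congr 1
    refine intervalIntegral.integral_congr fun x hx => ?_
    rw [uIcc_of_le zero_le_one] at hx
    by_cases hxs : x ∈ s
    · have h1 : ∀ (F : ℝ × ℝ → ℝ) (y : ℝ),
          (Prod.fst ⁻¹' s).indicator F (x, y) = F (x, y) := fun F y =>
        indicator_of_mem (by exact hxs) F
      simp only [h1, integral_gFun_slice hx, intervalIntegral.integral_const, smul_eq_mul, sub_zero]
    · have h1 : ∀ (F : ℝ × ℝ → ℝ) (y : ℝ), (Prod.fst ⁻¹' s).indicator F (x, y) = 0 := fun F y =>
        indicator_of_notMem (by exact hxs) F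
      simp only [h1]
  · exact (continuous_mainEffect.measurable.comp
      (comap_measurable Prod.fst)).aestronglyMeasurable

/-- Half the mean of the g-function, as an integral in `L = 1 - x₁`. -/
lemma integral_mean : ∫ L in (0 : ℝ)..1, L * (|4 * L - 2| * sliceMean L) = 1 / 2 := by
  have hc := continuous_sliceMean
  rw [integral_piecewise (φ := fun L => L * (|4 * L - 2| * sliceMean L))
    (p := fun L => 3 * L - 8 * L ^ 2 + 4 * L ^ 3)
    (q := fun L => 4 * L ^ 3 - 4 * L ^ 2 + 3 * L - 1)
    (A := fun L => 3 / 2 * L ^ 2 - 8 / 3 * L ^ 3 + L ^ 4)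
    (B := fun L => L ^ 4 - 4 / 3 * L ^ 3 + 3 / 2 * L ^ 2 - L) (by fun_prop)
    (fun y _ h => by simp only [abs_low h, sliceMean_low h]; ring)
    (fun y h _ => by simp only [abs_high h, sliceMean_high h]; field_simp; ring)
    (fun y => ?_) (fun y _ => ?_) zero_le_one le_rfl]
  · norm_num
  · refine HasDerivAt.congr_deriv ((((hasDerivAt_pow 2 y).const_mul (3 / 2)).sub
      ((hasDerivAt_pow 3 y).const_mul (8 / 3))).add (hasDerivAt_pow 4 y)) ?_
    simp; ring
  · refine HasDerivAt.congr_deriv ((((hasDerivAt_pow 4 y).sub ((hasDerivAt_pow 3 y).const_mul (4 / 3))).add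
      ((hasDerivAt_pow 2 y).const_mul (3 / 2))).sub (hasDerivAt_id y)) ?_
    simp; ring

/-- Half the second moment of the g-function, as an integral in `L = 1 - x₁`. -/
lemma integral_second_moment :
    ∫ L in (0 : ℝ)..1, |4 * L - 2| ^ 2 * sliceSq L = 13 / 18 := by
  have hc := continuous_sliceSq
  -- Only the cubic term of `sliceSq` is expanded, in powers of `3 - 4L` resp. `4L - 1`.
  rw [integral_piecewise (φ := fun L => |4 * L - 2| ^ 2 * sliceSq L)
    (p := fun L => ((3 - 4 * L) - 1) ^ 2 * (27 - (3 - 4 * L) ^ 3) / 48)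
    (q := fun L => ((4 * L - 1) - 1) ^ 2 * (25 + (4 * L - 1) ^ 3) / 48)
    (A := fun L => (- 9 * (2 - 4 * L) ^ 3 + (3 - 4 * L) ^ 6 / 6
      - 2 / 5 * (3 - 4 * L) ^ 5 + (3 - 4 * L) ^ 4 / 4) / 192)
    (B := fun L => (25 / 3 * (4 * L - 2) ^ 3 + (4 * L - 1) ^ 6 / 6
      - 2 / 5 * (4 * L - 1) ^ 5 + (4 * L - 1) ^ 4 / 4) / 192) (by fun_prop)
    (fun y _ h => by simp only [abs_low h, sliceSq, if_pos h]; ring)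
    (fun y h _ => ?_)
    (fun y => ?_) (fun y _ => ?_) zero_le_one le_rfl]
  · norm_num
  · rcases h.eq_or_lt with rfl | h'
    · norm_num [sliceSq]
    · simp only [abs_high h, sliceSq, if_neg (not_le.2 h')]; ring
  · have h3 : HasDerivAt (fun L : ℝ => 3 - 4 * L) (-(4 * 1)) y :=
      ((hasDerivAt_id y).const_mul 4).const_sub 3
    have h2 : HasDerivAt (fun L : ℝ => 2 - 4 * L) (-(4 * 1)) y :=
      ((hasDerivAt_id y).const_mul 4).const_sub 2
    refine HasDerivAt.congr_deriv ((((((h2.pow 3).const_mul (-9)).add ((h3.pow 6).div_const 6)).sub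
      ((h3.pow 5).const_mul (2 / 5))).add ((h3.pow 4).div_const 4)).div_const 192) ?_
    simp; ring
  · have h1 : HasDerivAt (fun L : ℝ => 4 * L - 1) (4 * 1) y :=
      ((hasDerivAt_id y).const_mul 4).sub_const 1
    have h2 : HasDerivAt (fun L : ℝ => 4 * L - 2) (4 * 1) y :=
      ((hasDerivAt_id y).const_mul 4).sub_const 2
    refine HasDerivAt.congr_deriv ((((((h2.pow 3).const_mul (25 / 3)).add ((h1.pow 6).div_const 6)).sub
      ((h1.pow 5).const_mul (2 / 5))).add ((h1.pow 4).div_const 4)).div_const 192) ?_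
    simp; ring

/-- Half the second moment of the main effect, as an integral in `L = 1 - x₁`. -/
lemma integral_mainEffect_sq :
    ∫ L in (0 : ℝ)..1, L * (|4 * L - 2| * sliceMean L) ^ 2 = Real.log 2 - 1 / 60 := by
  have hc := continuous_sliceMean
  rw [integral_piecewise (φ := fun L => L * (|4 * L - 2| * sliceMean L) ^ 2)
    (p := fun L => 9 * L - 48 * L ^ 2 + 88 * L ^ 3 - 64 * L ^ 4 + 16 * L ^ 5)
    (q := fun L => 16 * L ^ 5 - 32 * L ^ 4 + 40 * L ^ 3 - 32 * L ^ 2 + 17 * L - 6 + L⁻¹)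
    (A := fun L => 9 / 2 * L ^ 2 - 16 * L ^ 3 + 22 * L ^ 4 - 64 / 5 * L ^ 5 + 8 / 3 * L ^ 6)
    (B := fun L => 8 / 3 * L ^ 6 - 32 / 5 * L ^ 5 + 10 * L ^ 4 - 32 / 3 * L ^ 3 + 17 / 2 * L ^ 2
      - 6 * L + Real.log L) (by fun_prop)
    (fun y _ h => by simp only [abs_low h, sliceMean_low h]; ring)
    (fun y h _ => by
      have : y ≠ 0 := by linarith
      simp only [abs_high h, sliceMean_high h]; field_simp; ring)
    (fun y => ?_) (fun y hy => ?_) zero_le_one le_rfl]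
  · rw [one_div, Real.log_inv]
    norm_num
    ring
  · refine HasDerivAt.congr_deriv ((((((hasDerivAt_pow 2 y).const_mul (9 / 2)).sub
      ((hasDerivAt_pow 3 y).const_mul 16)).add ((hasDerivAt_pow 4 y).const_mul 22)).sub
      ((hasDerivAt_pow 5 y).const_mul (64 / 5))).add ((hasDerivAt_pow 6 y).const_mul (8 / 3))) ?_
    simp; ring
  · refine HasDerivAt.congr_deriv ((((((((hasDerivAt_pow 6 y).const_mul (8 / 3)).sub
      ((hasDerivAt_pow 5 y).const_mul (32 / 5))).add ((hasDerivAt_pow 4 y).const_mul 10)).sub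
      ((hasDerivAt_pow 3 y).const_mul (32 / 3))).add ((hasDerivAt_pow 2 y).const_mul (17 / 2))).sub
      ((hasDerivAt_id y).const_mul 6)).add (Real.hasDerivAt_log (by linarith : y ≠ 0))) ?_
    simp; ring

lemma mean_gFun : ∫ q, gFun q ∂triangleMeasure = 1 := by
  have h : ∫ x in (0 : ℝ)..1, ∫ y in (0 : ℝ)..(1 - x), gFun (x, y) = 1 / 2 := by
    rw [intervalIntegral.integral_congr (g := fun x => (fun L => L * (|4 * L - 2| * sliceMean L))
      (1 - x)) fun x hx => ?_, intervalIntegral.integral_comp_sub_left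
      (fun L => L * (|4 * L - 2| * sliceMean L))]
    · simpa using integral_mean
    · rw [uIcc_of_le zero_le_one] at hx
      simp only [integral_gFun_slice hx, mainEffect, abs_reflect x]
  rw [integral_triangle (integrable_triangle_of_continuous continuous_gFun), h]
  norm_num

lemma second_moment_gFun : ∫ q, gFun q ^ 2 ∂triangleMeasure = 13 / 9 := by
  have h : ∫ x in (0 : ℝ)..1, ∫ y in (0 : ℝ)..(1 - x), gFun (x, y) ^ 2 = 13 / 18 := by
    rw [intervalIntegral.integral_congr (g := fun x => (fun L => |4 * L - 2| ^ 2 * sliceSq L)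
      (1 - x)) fun x hx => ?_, intervalIntegral.integral_comp_sub_left
      (fun L => |4 * L - 2| ^ 2 * sliceSq L)]
    · simpa using integral_second_moment
    · rw [uIcc_of_le zero_le_one] at hx
      have h : ∀ y, gFun (x, y) ^ 2 = |4 * x - 2| ^ 2 * ((|4 * y - 2| + 1) / 2) ^ 2 := fun y => by
        simp only [gFun]; ring
      simp only [h]
      rw [intervalIntegral.integral_const_mul,
        integral_slice_sq (by linarith [hx.2]) (by linarith [hx.1]), abs_reflect x]
  rw [integral_triangle (F := fun q => gFun q ^ 2)
    (integrable_triangle_of_continuous (continuous_gFun.pow 2)), h]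
  norm_num

lemma second_moment_mainEffect :
    ∫ q, mainEffect q.1 ^ 2 ∂triangleMeasure = 2 * Real.log 2 - 1 / 30 := by
  have h : ∫ x in (0 : ℝ)..1, ∫ _ in (0 : ℝ)..(1 - x), mainEffect x ^ 2
      = Real.log 2 - 1 / 60 := by
    rw [intervalIntegral.integral_congr (g := fun x => (fun L =>
      L * (|4 * L - 2| * sliceMean L) ^ 2) (1 - x)) fun x hx => ?_,
      intervalIntegral.integral_comp_sub_left
      (fun L => L * (|4 * L - 2| * sliceMean L) ^ 2)]
    · simpa using integral_mainEffect_sq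
    · simp only [intervalIntegral.integral_const, smul_eq_mul, sub_zero, mainEffect, abs_reflect x]
  rw [integral_triangle (F := fun q => mainEffect q.1 ^ 2) (integrable_triangle_of_continuous
    ((continuous_mainEffect.comp continuous_fst).pow 2)), h]
  ring

lemma mean_mainEffect : ∫ q, mainEffect q.1 ∂triangleMeasure = 1 := by
  rw [← integral_congr_ae condExp_gFun, integral_condExp measurable_fst.comap_le, mean_gFun]

lemma memLp_two_of_continuous {F : ℝ × ℝ → ℝ} (hF : Continuous F) :
    MemLp F 2 triangleMeasure :=
  (memLp_two_iff_integrable_sq hF.aestronglyMeasurable).2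
    (integrable_triangle_of_continuous (hF.pow 2))

/-- For the 2D g-function `f(x₁,x₂) = |4x₁−2|·(|4x₂−2|+1)/2` with `(X₁,X₂)` uniformly
distributed on the lower triangle `Ω₂ = {(x₁,x₂) ∈ [0,1]² : x₁ + x₂ ≤ 1}`, the main effect
Sobol' index of `x₁`, `S_{x₁} = Var(E[f | X₁]) / Var(f)`, equals `−93/40 + (9/2)·ln 2`. -/
theorem main_effect_x1_g_function_lower_triangle
    (Ω₂ : Set (ℝ × ℝ))
    (hΩ₂ : Ω₂ = {q : ℝ × ℝ | q.1 ∈ Icc (0 : ℝ) 1 ∧ q.2 ∈ Icc (0 : ℝ) 1 ∧ q.1 + q.2 ≤ 1})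
    (P : Measure (ℝ × ℝ)) (hP : P = (2 : ENNReal) • volume.restrict Ω₂)
    (f : ℝ × ℝ → ℝ) (hf : f = fun q => |4 * q.1 - 2| * (|4 * q.2 - 2| + 1) / 2) :
    variance (P[f | MeasurableSpace.comap Prod.fst inferInstance]) P / variance f P
      = -93 / 40 + (9 / 2) * Real.log 2 := by
  subst hΩ₂ hP hf
  change variance (triangleMeasure[gFun | MeasurableSpace.comap Prod.fst inferInstance])
    triangleMeasure / variance gFun triangleMeasure = _
  rw [variance_congr condExp_gFun,
    variance_eq_sub (X := fun q : ℝ × ℝ => mainEffect q.1)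
      (memLp_two_of_continuous (continuous_mainEffect.comp continuous_fst)),
    variance_eq_sub (memLp_two_of_continuous continuous_gFun)]
  simp only [Pi.pow_apply, second_moment_gFun, mean_gFun, second_moment_mainEffect, mean_mainEffect]
  ring
end

section
/- Let (X₁, X₂) be distributed according to the uniform probability measure P on the region Ω = {(x₁, x₂) ∈ [0,1]² : x₂ ≥ 4x₁(1 − x₁)} (density 3 on Ω), and let f(x₁, x₂) = |4x₁ − 2| · (|4x₂ − 2| + 1)/2. Then the main effect Sobol' index of x₁, namely S_{x₁} = Var( E_P[f(X₁, X₂) | X₁] ) / Var_P(f), equals 3·(384√2 − 575)/(144√2 − 521). -/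
/-!
Put `u = |2x - 1|`. The slice of the region at `x₁ = x` is `[1 - u², 1]`, of length `u²`, and
`f(x, y) = u (|4y - 2| + 1)`. Hence the conditional expectation given `X₁ = x` is the slice average
`condMean u` (`condExp_eq`: both sides have the same integral over every vertical strip, by
Fubini in the form of `slice`).

The moments `E[f] = 3/2`, `E[f²]` and `E[condMean²]` become integrals over `u ∈ [0, 1]` of
functions that are polynomial on each side of `u = √2/2`; they are evaluated by the fundamental
theorem of calculus (`slice_univ`). With `Var = E[·²] - E[·]²` they give
`Var f = 521/1260 - (4/35)√2` and `Var E[f | X₁] = (575 - 384√2)/420`, whose quotient is the index.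
-/

open MeasureTheory ProbabilityTheory Set

/-- Integral of a function given by two continuous pieces with antiderivatives `A` and `B`. -/
lemma piece {F p q A B : ℝ → ℝ} {l c r : ℝ} (hlc : l ≤ c) (hcr : c ≤ r)
    (hp : ∀ x ∈ Icc l c, F x = p x) (hq : ∀ x ∈ Icc c r, F x = q x)
    (cp : Continuous p) (cq : Continuous q)
    (hA : ∀ x, HasDerivAt A (p x) x) (hB : ∀ x, HasDerivAt B (q x) x) :
    IntervalIntegrable F volume l r ∧ ∫ x in l..r, F x = A c - A l + (B r - B c) := by
  have e1 : EqOn p F (uIcc l c) := fun x hx => (hp x (by rwa [uIcc_of_le hlc] at hx)).symm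
  have e2 : EqOn q F (uIcc c r) := fun x hx => (hq x (by rwa [uIcc_of_le hcr] at hx)).symm
  have i1 : IntervalIntegrable F volume l c :=
    (cp.intervalIntegrable l c).congr (fun x hx => e1 (uIoc_subset_uIcc hx))
  have i2 : IntervalIntegrable F volume c r :=
    (cq.intervalIntegrable c r).congr (fun x hx => e2 (uIoc_subset_uIcc hx))
  refine ⟨i1.trans i2, ?_⟩
  rw [← intervalIntegral.integral_add_adjacent_intervals i1 i2,
    ← intervalIntegral.integral_congr e1, ← intervalIntegral.integral_congr e2,
    intervalIntegral.integral_eq_sub_of_hasDerivAt (fun x _ => hA x) (cp.intervalIntegrable _ _),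
    intervalIntegral.integral_eq_sub_of_hasDerivAt (fun x _ => hB x) (cq.intervalIntegrable _ _)]

lemma integral_comp_abs_centered {φ : ℝ → ℝ} (h : IntervalIntegrable φ volume 0 1) :
    ∫ x in (0 : ℝ)..1, φ |2 * x - 1| = ∫ u in (0 : ℝ)..1, φ u := by
  have e1 : EqOn φ (fun u => φ |u|) (uIcc 0 1) := fun x hx => by
    rw [uIcc_of_le zero_le_one] at hx
    simp [abs_of_nonneg hx.1]
  have i1 : IntervalIntegrable (fun u => φ |u|) volume 0 1 :=
    h.congr (fun x hx => e1 (uIoc_subset_uIcc hx))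
  have i2 : IntervalIntegrable (fun u => φ |u|) volume (-1) 0 := by
    rw [IntervalIntegrable.iff_comp_neg]
    simpa using i1.symm
  have e2 : ∫ u in (-1 : ℝ)..0, φ |u| = ∫ u in (0 : ℝ)..1, φ |u| := by
    have := intervalIntegral.integral_comp_neg (a := (0 : ℝ)) (b := 1) (fun u => φ |u|)
    simpa using this.symm
  have := intervalIntegral.integral_comp_mul_sub (a := (0 : ℝ)) (b := 1) (c := 2)
    (fun u => φ |u|) two_ne_zero 1
  rw [this, intervalIntegral.integral_congr e1]
  norm_num
  rw [← intervalIntegral.integral_add_adjacent_intervals i2 i1, e2]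
  ring

/-- The feasible domain: the part of the unit square on or above the parabola `y = 4x(1 - x)`. -/
def paraRegion : Set (ℝ × ℝ) :=
  {q : ℝ × ℝ | q.1 ∈ Icc (0 : ℝ) 1 ∧ q.2 ∈ Icc (0 : ℝ) 1 ∧ 4 * q.1 * (1 - q.1) ≤ q.2}

/-- The uniform probability measure on `paraRegion`, whose area is `1 / 3`. -/
noncomputable def paraUniform : Measure (ℝ × ℝ) := (3 : ENNReal) • volume.restrict paraRegion

/-- Fubini on `paraRegion` over the vertical strip above `t`; the lower boundary
`4x(1 - x)` of the slice at `x` is written as `1 - |2x - 1| ^ 2`. -/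
lemma slice
    {F : ℝ × ℝ → ℝ} (hF : Continuous F) {t : Set ℝ} (ht : MeasurableSet t) :
    IntegrableOn F paraRegion ∧
    ∫ q in Prod.fst ⁻¹' t, F q ∂paraUniform
      = 3 * ∫ x in (0 : ℝ)..1, t.indicator
          (fun x => ∫ y in (1 - |2 * x - 1| ^ 2)..1, F (x, y)) x := by
  have hcl : IsClosed paraRegion := by
    exact (isClosed_Icc.preimage continuous_fst).and
      ((isClosed_Icc.preimage continuous_snd).and
        (isClosed_le (f := fun q : ℝ × ℝ => 4 * q.1 * (1 - q.1)) (by fun_prop) continuous_snd))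
  have hc : IsCompact paraRegion := (isCompact_Icc.prod isCompact_Icc).of_isClosed_subset hcl (by
    rintro q ⟨h1, h2, -⟩; exact ⟨h1, h2⟩ : paraRegion ⊆ Icc (0:ℝ) 1 ×ˢ Icc (0:ℝ) 1)
  have hi : IntegrableOn F paraRegion := hF.continuousOn.integrableOn_compact hc
  have hm := hcl.measurableSet
  have hT : MeasurableSet (Prod.fst ⁻¹' t : Set (ℝ × ℝ)) := measurable_fst ht
  refine ⟨hi, ?_⟩
  rw [paraUniform, Measure.restrict_smul, integral_smul_measure, Measure.restrict_restrict hT,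
    ← integral_indicator (hT.inter hm), Measure.volume_eq_prod, integral_prod]
  · rw [intervalIntegral.integral_of_le zero_le_one, ← integral_Icc_eq_integral_Ioc,
      ← integral_indicator measurableSet_Icc]
    simp only [ENNReal.toReal_ofNat, smul_eq_mul]
    congr 2
    ext x
    by_cases hx : x ∈ Icc (0 : ℝ) 1
    · rw [indicator_of_mem hx]
      have hb : 1 - |2 * x - 1| ^ 2 = 4 * x * (1 - x) := by rw [sq_abs]; ring
      have hb1 : 4 * x * (1 - x) ≤ 1 := by nlinarith [sq_nonneg (2 * x - 1)]
      have hb0 : 0 ≤ 4 * x * (1 - x) := mul_nonneg (by linarith [hx.1]) (by linarith [hx.2])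
      by_cases hxt : x ∈ t
      · rw [indicator_of_mem hxt, hb, intervalIntegral.integral_of_le hb1,
          ← integral_Icc_eq_integral_Ioc, ← integral_indicator measurableSet_Icc]
        congr 1
        ext y
        have : (x, y) ∈ Prod.fst ⁻¹' t ∩ paraRegion ↔ y ∈ Icc (4 * x * (1 - x)) 1 := by
          constructor
          · rintro ⟨-, -, ⟨-, h⟩, h'⟩; exact ⟨h', h⟩
          · rintro ⟨h, h'⟩; exact ⟨hxt, hx, ⟨hb0.trans h, h'⟩, h⟩
        simp only [indicator, this]
      · simp [indicator, hxt]
    · rw [indicator_of_notMem hx]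
      have : ∀ y, (x, y) ∉ Prod.fst ⁻¹' t ∩ paraRegion := fun y h => hx h.2.1
      simp [indicator_of_notMem (this _)]
  · rw [← Measure.volume_eq_prod, integrable_indicator_iff (hT.inter hm)]
    exact hi.mono_set inter_subset_right

/-- Reduces a `paraUniform`-integral to boundary values of antiderivatives. The slice integral `φ`
depends on `u = |2x - 1|` only, and its formula changes at `u = √2 / 2`, where the parabola
crosses the kink `y = 1 / 2` of `|4y - 2|`. -/
lemma slice_univ
    {F : ℝ × ℝ → ℝ} (hF : Continuous F) {φ p q A B : ℝ → ℝ}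
    (hφ : ∀ x, ∫ y in (1 - |2 * x - 1| ^ 2)..1, F (x, y) = φ |2 * x - 1|)
    (hp : ∀ u, 0 ≤ u → u ^ 2 ≤ 1 / 2 → φ u = p u)
    (hq : ∀ u, 0 ≤ u → 1 / 2 ≤ u ^ 2 → φ u = q u)
    (cp : Continuous p) (cq : Continuous q)
    (hA : ∀ x, HasDerivAt A (p x) x) (hB : ∀ x, HasDerivAt B (q x) x) :
    ∫ z, F z ∂paraUniform
      = 3 * (A (√2 / 2) - A 0 + (B 1 - B (√2 / 2))) := by
  have h := (slice hF MeasurableSet.univ).2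
  have s2 : √2 ^ 2 = 2 := Real.sq_sqrt zero_le_two
  have s0 : 0 ≤ √2 := Real.sqrt_nonneg 2
  obtain ⟨hi, hv⟩ := piece (F := φ) (l := 0) (c := √2 / 2) (r := 1) (by positivity)
    (by nlinarith) (fun u hu => hp u hu.1 (by nlinarith [hu.1, hu.2]))
    (fun u hu => hq u (by linarith [hu.1]) (by nlinarith [hu.1, hu.2])) cp cq hA hB
  simp only [preimage_univ, Measure.restrict_univ, indicator_univ, hφ] at h
  rw [h, integral_comp_abs_centered hi, hv]

lemma inner_one {b : ℝ} (hb : b ≤ 1) :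
    ∫ y in b..1, (|4 * y - 2| + 1)
      = if 1 / 2 ≤ b then (1 - b) * (1 + 2 * b) else 2 - 3 * b + 2 * b ^ 2 := by
  have hB : ∀ y : ℝ, HasDerivAt (fun y => 2 * y ^ 2 - y) (4 * y - 1) y := fun y => by
    exact (((hasDerivAt_pow 2 y).const_mul 2).sub (hasDerivAt_id y)).congr_deriv (by norm_num; ring)
  have hA : ∀ y : ℝ, HasDerivAt (fun y => 3 * y - 2 * y ^ 2) (3 - 4 * y) y := fun y => by
    exact (((hasDerivAt_id y).const_mul 3).sub ((hasDerivAt_pow 2 y).const_mul 2)).congr_deriv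
      (by norm_num; ring)
  split_ifs with h
  · rw [(piece (c := b) (p := fun y => 4 * y - 1) (q := fun y => 4 * y - 1) le_rfl hb ?_ ?_
      (by fun_prop) (by fun_prop) hB hB).2]
    · ring
    all_goals
      intro y hy
      rw [abs_of_nonneg (by linarith [hy.1])]; ring
  · push Not at h
    rw [(piece (c := 1 / 2) (p := fun y => 3 - 4 * y) (q := fun y => 4 * y - 1) h.le (by norm_num)
      ?_ ?_ (by fun_prop) (by fun_prop) hA hB).2]
    · ring
    · intro y hy
      rw [abs_of_nonpos (by linarith [hy.2])]; ring
    · intro y hy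
      rw [abs_of_nonneg (by linarith [hy.1])]; ring

lemma inner_sq {b : ℝ} (hb : b ≤ 1) :
    ∫ y in b..1, (|4 * y - 2| + 1) ^ 2
      = if 1 / 2 ≤ b then (27 - (4 * b - 1) ^ 3) / 12 else ((3 - 4 * b) ^ 3 + 25) / 12 := by
  have hB : ∀ y : ℝ, HasDerivAt (fun y => (4 * y - 1) ^ 3 / 12) ((4 * y - 1) ^ 2) y := fun y => by
    exact (((((hasDerivAt_id y).const_mul 4).sub_const 1).pow 3).div_const 12).congr_deriv
      (by norm_num; ring)
  have hA : ∀ y : ℝ, HasDerivAt (fun y => -(3 - 4 * y) ^ 3 / 12) ((3 - 4 * y) ^ 2) y := fun y => by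
    exact (((((hasDerivAt_id y).const_mul 4).const_sub 3).pow 3).neg.div_const 12).congr_deriv
      (by norm_num; ring)
  split_ifs with h
  · rw [(piece (c := b) (p := fun y => (4 * y - 1) ^ 2) (q := fun y => (4 * y - 1) ^ 2) le_rfl hb
      ?_ ?_ (by fun_prop) (by fun_prop) hB hB).2]
    · ring
    all_goals
      intro y hy
      rw [abs_of_nonneg (by linarith [hy.1])]; ring
  · push Not at h
    rw [(piece (c := 1 / 2) (p := fun y => (3 - 4 * y) ^ 2) (q := fun y => (4 * y - 1) ^ 2) h.le
      (by norm_num) ?_ ?_ (by fun_prop) (by fun_prop) hA hB).2]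
    · ring
    · intro y hy
      rw [abs_of_nonpos (by linarith [hy.2])]; ring
    · intro y hy
      rw [abs_of_nonneg (by linarith [hy.1])]; ring

/-- The conditional expectation of `f` given `X₁ = x`, as a function of `u = |2x - 1|`: it equals
`u (3 - 2u²)` for `u² ≤ 1/2` and `(1 - u² + 2u⁴) / u` for `u² ≥ 1/2`. The two branches differ by
`(2u² - 1)² / u`, so the two `max` merge them into one continuous function on all of `ℝ`. -/
noncomputable def condMean (u : ℝ) : ℝ :=
  u * (3 - 2 * u ^ 2) + max (2 * u ^ 2 - 1) 0 ^ 2 / max u (1 / 2)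

lemma continuous_condMean : Continuous condMean := by
  unfold condMean
  refine (by fun_prop : Continuous fun u : ℝ => u * (3 - 2 * u ^ 2)).add
    (Continuous.div (by fun_prop) (by fun_prop) fun u => ?_)
  have := le_max_right u (1 / 2)
  linarith

lemma condMean_of_le {u : ℝ} (h : u ^ 2 ≤ 1 / 2) : condMean u = u * (3 - 2 * u ^ 2) := by
  rw [condMean, max_eq_right (by linarith : 2 * u ^ 2 - 1 ≤ 0)]; simp

lemma mul_condMean_of_ge {u : ℝ} (h0 : 0 ≤ u) (h : 1 / 2 ≤ u ^ 2) :
    u * condMean u = 1 - u ^ 2 + 2 * u ^ 4 := by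
  have hu : 1 / 2 ≤ u := by nlinarith
  rw [condMean, max_eq_left (by linarith : 0 ≤ 2 * u ^ 2 - 1), max_eq_left hu]
  have : u ≠ 0 := by linarith
  field_simp
  ring

/-- `condMean u` is the average of `f` over the slice, which has length `u ^ 2`. -/
lemma sq_mul_condMean {u : ℝ} (h0 : 0 ≤ u) :
    u ^ 2 * condMean u = u * ∫ y in (1 - u ^ 2)..1, (|4 * y - 2| + 1) := by
  rw [inner_one (by nlinarith [sq_nonneg u])]
  split_ifs with h
  · rw [condMean_of_le (by linarith)]; ring
  · have := mul_condMean_of_ge h0 (by linarith)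
    linear_combination u * this

lemma abs_half (x : ℝ) : |4 * x - 2| = 2 * |2 * x - 1| := by
  rw [← abs_two, ← abs_mul, abs_two]; ring_nf

lemma inner_g (x : ℝ) : ∫ y in (1 - |2 * x - 1| ^ 2)..1, |4 * x - 2| * (|4 * y - 2| + 1) / 2
    = |2 * x - 1| ^ 2 * condMean |2 * x - 1| := by
  rw [sq_mul_condMean (abs_nonneg _), ← intervalIntegral.integral_const_mul]
  congr 1; ext y; rw [abs_half x]; ring

lemma mass : ∫ _, (1 : ℝ) ∂paraUniform = 1 := by
  have hA : ∀ u : ℝ, HasDerivAt (fun u => 1 / 3 * u ^ 3) (u ^ 2) u := fun u =>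
    ((hasDerivAt_pow 3 u).const_mul (1 / 3)).congr_deriv (by norm_num; ring)
  rw [slice_univ continuous_const (φ := fun u => u ^ 2) (by simp) (fun _ _ _ => rfl)
    (fun _ _ _ => rfl) (by fun_prop) (by fun_prop) hA hA]
  norm_num

lemma mean : ∫ q : ℝ × ℝ, |4 * q.1 - 2| * (|4 * q.2 - 2| + 1) / 2
    ∂paraUniform = 3 / 2 := by
  rw [slice_univ (by fun_prop) (φ := fun u => u ^ 2 * condMean u)
    (p := fun u => 3 * u ^ 3 - 2 * u ^ 5) (q := fun u => u - u ^ 3 + 2 * u ^ 5)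
    (A := fun u => 3 / 4 * u ^ 4 - 1 / 3 * u ^ 6)
    (B := fun u => 1 / 2 * u ^ 2 - 1 / 4 * u ^ 4 + 1 / 3 * u ^ 6)
    inner_g ?_ ?_ (by fun_prop) (by fun_prop) ?_ ?_]
  · have s2 : √2 ^ 2 = 2 := Real.sq_sqrt zero_le_two
    have s4 : √2 ^ 4 = 4 := by rw [pow_mul √2 2 2, s2]; norm_num
    have s6 : √2 ^ 6 = 8 := by rw [pow_mul √2 2 3, s2]; norm_num
    norm_num [div_pow, s2, s4, s6]
  · intro u _ h
    simp only [condMean_of_le h]; ring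
  · intro u h0 h
    linear_combination u * mul_condMean_of_ge h0 h
  · intro u
    exact (((hasDerivAt_pow 4 u).const_mul (3 / 4)).sub
      ((hasDerivAt_pow 6 u).const_mul (1 / 3))).congr_deriv (by norm_num; ring)
  · intro u
    exact ((((hasDerivAt_pow 2 u).const_mul (1 / 2)).sub
      ((hasDerivAt_pow 4 u).const_mul (1 / 4))).add
      ((hasDerivAt_pow 6 u).const_mul (1 / 3))).congr_deriv (by norm_num; ring)

lemma second_moment : ∫ q : ℝ × ℝ, (|4 * q.1 - 2| * (|4 * q.2 - 2| + 1) / 2) ^ 2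
    ∂paraUniform = 521 / 1260 - 4 / 35 * √2 + 9 / 4 := by
  rw [slice_univ (by fun_prop)
    (φ := fun u => u ^ 2 * ∫ y in (1 - u ^ 2)..1, (|4 * y - 2| + 1) ^ 2)
    (p := fun u => 9 * u ^ 4 - 12 * u ^ 6 + 16 / 3 * u ^ 8)
    (q := fun u => 2 * u ^ 2 + u ^ 4 - 4 * u ^ 6 + 16 / 3 * u ^ 8)
    (A := fun u => 9 / 5 * u ^ 5 - 12 / 7 * u ^ 7 + 16 / 27 * u ^ 9)
    (B := fun u => 2 / 3 * u ^ 3 + 1 / 5 * u ^ 5 - 4 / 7 * u ^ 7 + 16 / 27 * u ^ 9)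
    ?_ ?_ ?_ (by fun_prop) (by fun_prop) ?_ ?_]
  · have s2 : √2 ^ 2 = 2 := Real.sq_sqrt zero_le_two
    have s3 : √2 ^ 3 = 2 * √2 := by rw [pow_succ, s2]
    have s5 : √2 ^ 5 = 4 * √2 := by rw [pow_succ, pow_mul √2 2 2, s2]; norm_num
    have s7 : √2 ^ 7 = 8 * √2 := by rw [pow_succ, pow_mul √2 2 3, s2]; norm_num
    have s9 : √2 ^ 9 = 16 * √2 := by rw [pow_succ, pow_mul √2 2 4, s2]; norm_num
    simp only [div_pow, s3, s5, s7, s9]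
    ring
  · intro x
    rw [← intervalIntegral.integral_const_mul]
    congr 1; ext y; simp only [abs_half x]; ring
  · intro u _ h
    simp only [inner_sq (by nlinarith [sq_nonneg u] : 1 - u ^ 2 ≤ 1)]
    rw [if_pos (by linarith)]; ring
  · intro u _ h
    simp only [inner_sq (by nlinarith [sq_nonneg u] : 1 - u ^ 2 ≤ 1)]
    split_ifs with hle
    -- at the breakpoint `u ^ 2 = 1 / 2` both branches agree
    · have e : u ^ 2 = 1 / 2 := by linarith
      rw [show u ^ 4 = (u ^ 2) ^ 2 by ring, show u ^ 6 = (u ^ 2) ^ 3 by ring,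
        show u ^ 8 = (u ^ 2) ^ 4 by ring, e]
      norm_num
    · ring
  · intro u
    exact ((((hasDerivAt_pow 5 u).const_mul (9 / 5)).sub
      ((hasDerivAt_pow 7 u).const_mul (12 / 7))).add
      ((hasDerivAt_pow 9 u).const_mul (16 / 27))).congr_deriv (by norm_num; ring)
  · intro u
    exact (((((hasDerivAt_pow 3 u).const_mul (2 / 3)).add
      ((hasDerivAt_pow 5 u).const_mul (1 / 5))).sub
      ((hasDerivAt_pow 7 u).const_mul (4 / 7))).add
      ((hasDerivAt_pow 9 u).const_mul (16 / 27))).congr_deriv (by norm_num; ring)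

lemma second_moment_condMean : ∫ q : ℝ × ℝ, condMean |2 * q.1 - 1| ^ 2
    ∂paraUniform = (575 - 384 * √2) / 420 + 9 / 4 := by
  have hc := continuous_condMean
  rw [slice_univ (by fun_prop)
    (φ := fun u => u ^ 2 * condMean u ^ 2)
    (p := fun u => 9 * u ^ 4 - 12 * u ^ 6 + 4 * u ^ 8)
    (q := fun u => 1 - 2 * u ^ 2 + 5 * u ^ 4 - 4 * u ^ 6 + 4 * u ^ 8)
    (A := fun u => 9 / 5 * u ^ 5 - 12 / 7 * u ^ 7 + 4 / 9 * u ^ 9)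
    (B := fun u => u - 2 / 3 * u ^ 3 + 1 * u ^ 5 - 4 / 7 * u ^ 7 + 4 / 9 * u ^ 9)
    (by simp) ?_ ?_ (by fun_prop) (by fun_prop) ?_ ?_]
  · have s2 : √2 ^ 2 = 2 := Real.sq_sqrt zero_le_two
    have s3 : √2 ^ 3 = 2 * √2 := by rw [pow_succ, s2]
    have s5 : √2 ^ 5 = 4 * √2 := by rw [pow_succ, pow_mul √2 2 2, s2]; norm_num
    have s7 : √2 ^ 7 = 8 * √2 := by rw [pow_succ, pow_mul √2 2 3, s2]; norm_num
    have s9 : √2 ^ 9 = 16 * √2 := by rw [pow_succ, pow_mul √2 2 4, s2]; norm_num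
    simp only [div_pow, s3, s5, s7, s9]
    ring
  · intro u _ h
    simp only [condMean_of_le h]; ring
  · intro u h0 h
    linear_combination (u * condMean u + (1 - u ^ 2 + 2 * u ^ 4)) * mul_condMean_of_ge h0 h
  · intro u
    exact ((((hasDerivAt_pow 5 u).const_mul (9 / 5)).sub
      ((hasDerivAt_pow 7 u).const_mul (12 / 7))).add
      ((hasDerivAt_pow 9 u).const_mul (4 / 9))).congr_deriv (by norm_num; ring)
  · intro u
    exact (((((hasDerivAt_id u).sub ((hasDerivAt_pow 3 u).const_mul (2 / 3))).add
      ((hasDerivAt_pow 5 u).const_mul 1)).sub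
      ((hasDerivAt_pow 7 u).const_mul (4 / 7))).add
      ((hasDerivAt_pow 9 u).const_mul (4 / 9))).congr_deriv (by norm_num; ring)

lemma integrable_of_continuous {F : ℝ × ℝ → ℝ} (hF : Continuous F) :
    Integrable F paraUniform :=
  Integrable.smul_measure (slice hF MeasurableSet.univ).1 (by norm_num)

lemma isProb : IsProbabilityMeasure paraUniform := by
  have hfin : IsFiniteMeasure paraUniform :=
    (integrable_const_iff_isFiniteMeasure one_ne_zero).1
      (integrable_of_continuous (continuous_const (y := (1 : ℝ))))
  have h := mass
  rw [integral_const, smul_eq_mul, mul_one] at h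
  exact isProbabilityMeasure_iff_real.2 h

lemma condExp_eq : (fun q : ℝ × ℝ => condMean |2 * q.1 - 1|)
    =ᵐ[paraUniform]
    paraUniform[fun q : ℝ × ℝ => |4 * q.1 - 2| * (|4 * q.2 - 2| + 1) / 2 |
      MeasurableSpace.comap Prod.fst inferInstance] := by
  have hc := continuous_condMean
  have := isProb
  refine ae_eq_condExp_of_forall_setIntegral_eq measurable_fst.comap_le
    (integrable_of_continuous (by fun_prop))
    (fun s _ _ => (integrable_of_continuous (by fun_prop)).integrableOn) ?_ ?_
  · rintro _ ⟨t, ht, rfl⟩ -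
    rw [(slice (by fun_prop) ht).2, (slice (by fun_prop) ht).2]
    simp only [inner_g, intervalIntegral.integral_const, smul_eq_mul, sub_sub_cancel]
  · have h : Measurable (fun x : ℝ => condMean |2 * x - 1|) :=
      (by fun_prop : Continuous _).measurable
    exact (h.comp (comap_measurable Prod.fst)).aestronglyMeasurable

/-- For the 2D g-function `f(x₁,x₂) = |4x₁−2|·(|4x₂−2|+1)/2` with `(X₁,X₂)` uniformly
distributed on `Ω = {(x₁,x₂) ∈ [0,1]² : x₂ ≥ 4x₁(1−x₁)}` (density 3 on `Ω`), the main
effect Sobol' index of `x₁`, `S_{x₁} = Var(E[f | X₁]) / Var(f)`, equals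
`3·(384√2 − 575)/(144√2 − 521)`. -/
theorem main_effect_x1_g_function_parabolic_region
    (Ω : Set (ℝ × ℝ))
    (hΩ : Ω = {q : ℝ × ℝ | q.1 ∈ Icc (0 : ℝ) 1 ∧ q.2 ∈ Icc (0 : ℝ) 1
        ∧ 4 * q.1 * (1 - q.1) ≤ q.2})
    (P : Measure (ℝ × ℝ)) (hP : P = (3 : ENNReal) • volume.restrict Ω)
    (f : ℝ × ℝ → ℝ) (hf : f = fun q => |4 * q.1 - 2| * (|4 * q.2 - 2| + 1) / 2) :
    variance (P[f | MeasurableSpace.comap Prod.fst inferInstance]) P / variance f P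
      = 3 * (384 * Real.sqrt 2 - 575) / (144 * Real.sqrt 2 - 521) := by
  subst hΩ
  change P = paraUniform at hP
  have hc := continuous_condMean
  have hprob : IsProbabilityMeasure P := hP ▸ isProb
  have hcond : (fun q : ℝ × ℝ => condMean |2 * q.1 - 1|) =ᵐ[P]
      P[f | MeasurableSpace.comap Prod.fst inferInstance] := by
    rw [hP, hf]; exact condExp_eq
  have hL2 : ∀ F : ℝ × ℝ → ℝ, Continuous F → MemLp F 2 P := fun F hF =>
    (memLp_two_iff_integrable_sq hF.aestronglyMeasurable).2
      (hP ▸ integrable_of_continuous (hF.pow 2))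
  have hmean : ∫ q, f q ∂P = 3 / 2 := by rw [hP, hf]; exact mean
  have hvf : variance f P = 521 / 1260 - 4 / 35 * √2 := by
    rw [variance_eq_sub (hL2 f (by rw [hf]; fun_prop)), hmean]
    have : ∫ q, (f ^ 2) q ∂P = 521 / 1260 - 4 / 35 * √2 + 9 / 4 := by
      rw [hP, hf]; exact second_moment
    rw [this]; ring
  have hvg : variance (P[f | MeasurableSpace.comap Prod.fst inferInstance]) P
      = (575 - 384 * √2) / 420 := by
    rw [← variance_congr hcond, variance_eq_sub (hL2 _ (by fun_prop)), integral_congr_ae hcond,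
      integral_condExp measurable_fst.comap_le, hmean]
    have : ∫ q, ((fun q : ℝ × ℝ => condMean |2 * q.1 - 1|) ^ 2) q ∂P
        = (575 - 384 * √2) / 420 + 9 / 4 := by
      rw [hP]; exact second_moment_condMean
    rw [this]; ring
  have s2 : √2 < 2 := by
    nlinarith [Real.sq_sqrt (zero_le_two (α := ℝ)), Real.sqrt_nonneg 2]
  have hd : 144 * √2 - 521 ≠ 0 := by linarith
  have hd' : 521 / 1260 - 4 / 35 * √2 ≠ 0 := by linarith
  rw [hvf, hvg, div_eq_div_iff hd' hd]
  ring
end
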